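/- Let D = [0, 2π] × [0, π/2]. Let λ : D × [0, ∞) → [0, ∞) (drone density), l : [0, ∞) → [0, ∞) (path loss), and g : D → [0, ∞) (ground-station antenna gain) be continuous functions, let P > 0 (average unwanted emission power), and let a ∈ ℝ. Define the volume functional J(r) = ∫∫_D (∫_0^{r(φ,θ)} ρ²·sin θ dρ) dφ dθ and the interference-reduction functional K(r) = ∫∫_D (∫_0^{r(φ,θ)} P·λ(φ,θ,ρ)·l(ρ)·g(φ,θ)·ρ²·sin θ dρ) dφ dθ, both on the space of continuous functions r : D → (0, ∞) with the sup norm. Suppose r* : D → (0, ∞) is continuous, satisfies K(r*) = a, is a local minimizer of J among continuous positive functions r satisfying K(r) = a, and suppose there exists a smooth function η₀ compactly supported in the open rectangle (0, 2π) × (0, π/2) with ∫∫_D P·λ(φ,θ,r*(φ,θ))·l(r*(φ,θ))·g(φ,θ)·r*(φ,θ)²·sin θ·η₀(φ,θ) dφ dθ ≠ 0. Then there exists a real constant μ such that P·λ(φ, θ, r*(φ, θ))·l(r*(φ, θ))·g(φ, θ) = μ for all (φ, θ) ∈ (0, 2π) × (0, π/2). -/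

import Mathlib

open MeasureTheory Real intervalIntegral

/-- The parameter domain `D = [0, 2π] × [0, π/2]` (azimuth × elevation). -/
def NFZDomain : Set (ℝ × ℝ) :=
  Set.Icc (0 : ℝ) (2 * Real.pi) ×ˢ Set.Icc (0 : ℝ) (Real.pi / 2)

/-- The volume functional `J(r) = ∫∫_D ∫_0^{r(φ,θ)} ρ² sin θ dρ dθ dφ` of the no-fly zone. -/
noncomputable def volJ (r : ℝ × ℝ → ℝ) : ℝ :=
  ∫ φ in (0 : ℝ)..(2 * Real.pi), ∫ θ in (0 : ℝ)..(Real.pi / 2),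
    ∫ ρ in (0 : ℝ)..(r (φ, θ)), ρ ^ 2 * Real.sin θ

/-- The interference-reduction functional
`K(r) = ∫∫_D ∫_0^{r(φ,θ)} P·λ(φ,θ,ρ)·l(ρ)·g(φ,θ)·ρ²·sin θ dρ dθ dφ`. -/
noncomputable def interfK (P : ℝ) (lam : ℝ × ℝ → ℝ → ℝ) (l : ℝ → ℝ) (g : ℝ × ℝ → ℝ)
    (r : ℝ × ℝ → ℝ) : ℝ :=
  ∫ φ in (0 : ℝ)..(2 * Real.pi), ∫ θ in (0 : ℝ)..(Real.pi / 2),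
    ∫ ρ in (0 : ℝ)..(r (φ, θ)), P * lam (φ, θ) ρ * l ρ * g (φ, θ) * ρ ^ 2 * Real.sin θ


open Topology Filter BoundedContinuousFunction

noncomputable def nfzClamp (p : ℝ × ℝ) : ℝ × ℝ :=
  (max 0 (min p.1 (2 * Real.pi)), max 0 (min p.2 (Real.pi / 2)))

lemma nfzClamp_cont : Continuous nfzClamp := by
  unfold nfzClamp; fun_prop

lemma nfzClamp_mem (p : ℝ × ℝ) : nfzClamp p ∈ NFZDomain := by
  have := Real.pi_pos
  refine ⟨⟨le_max_left _ _, max_le (by positivity) (min_le_right _ _)⟩,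
    ⟨le_max_left _ _, max_le (by positivity) (min_le_right _ _)⟩⟩

lemma nfzClamp_eq {p : ℝ × ℝ} (hp : p ∈ NFZDomain) : nfzClamp p = p := by
  obtain ⟨⟨h1, h2⟩, ⟨h3, h4⟩⟩ := hp
  unfold nfzClamp
  rw [min_eq_left h2, min_eq_left h4, max_eq_right h1, max_eq_right h3]

lemma nfz_compact : IsCompact NFZDomain := isCompact_Icc.prod isCompact_Icc

lemma nfz_meas : MeasurableSet NFZDomain := nfz_compact.isClosed.measurableSet

lemma nfz_integrable {H : ℝ × ℝ → ℝ} (hH : Continuous H) :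
    Integrable H (volume.restrict NFZDomain) :=
  hH.continuousOn.integrableOn_compact nfz_compact

lemma nfz_iter {F H : ℝ × ℝ → ℝ} (hH : Continuous H) (h : ∀ p ∈ NFZDomain, F p = H p) :
    (∫ φ in (0 : ℝ)..(2 * Real.pi), ∫ θ in (0 : ℝ)..(Real.pi / 2), F (φ, θ))
      = ∫ p in NFZDomain, H p := by
  have hpi := Real.pi_pos
  rw [← setIntegral_congr_fun nfz_meas h]
  have hI : IntegrableOn F NFZDomain :=
    (integrableOn_congr_fun h nfz_meas).2 (nfz_integrable hH)
  unfold NFZDomain at hI ⊢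
  rw [Measure.volume_eq_prod] at hI ⊢
  rw [setIntegral_prod _ hI, intervalIntegral.integral_of_le (by positivity),
    ← integral_Icc_eq_integral_Ioc]
  congr 1
  ext φ
  rw [intervalIntegral.integral_of_le (by positivity), ← integral_Icc_eq_integral_Ioc]

lemma nfz_ext {w : ℝ × ℝ → ℝ} (hw : Continuous w) :
    ∃ u : (ℝ × ℝ) →ᵇ ℝ, ∀ p ∈ NFZDomain, u p = w p := by
  obtain ⟨C, hC⟩ := nfz_compact.exists_bound_of_continuousOn hw.continuousOn
  refine ⟨BoundedContinuousFunction.ofNormedAddCommGroup (fun p => w (nfzClamp p))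
    (hw.comp nfzClamp_cont) C (fun p => hC _ (nfzClamp_mem p)), fun p hp => ?_⟩
  simp [nfzClamp_eq hp]

lemma nfz_inner_cont {h : ℝ × ℝ → ℝ → ℝ} (hh : Continuous (Function.uncurry h))
    {r : ℝ × ℝ → ℝ} (hr : Continuous r) :
    Continuous fun p => ∫ ρ in (0 : ℝ)..(r p), h p ρ :=
  intervalIntegral.continuous_parametric_intervalIntegral_of_continuous hh hr

lemma nfz_deriv {h : ℝ × ℝ → ℝ → ℝ} (hh : Continuous (Function.uncurry h))
    {r : ℝ × ℝ → ℝ} (hr : Continuous r) :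
    ∃ L : StrongDual ℝ ((ℝ × ℝ) →ᵇ ℝ), (∀ u, L u = ∫ p in NFZDomain, h p (r p) * u p) ∧
      HasStrictFDerivAt
        (fun u : (ℝ × ℝ) →ᵇ ℝ => ∫ p in NFZDomain, ∫ ρ in (0 : ℝ)..(r p + u p), h p ρ) L 0 := by
  have hhr : Continuous fun p => h p (r p) := hh.comp (continuous_id.prodMk hr)
  have hfin : volume NFZDomain < ⊤ := nfz_compact.measure_lt_top
  set V := volume.real NFZDomain with hV
  have hV0 : 0 ≤ V := measureReal_nonneg
  obtain ⟨C, hC⟩ := nfz_compact.exists_bound_of_continuousOn hhr.continuousOn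
  have hint : ∀ u : (ℝ × ℝ) →ᵇ ℝ, Integrable (fun p => h p (r p) * u p)
      (volume.restrict NFZDomain) := fun u => nfz_integrable (hhr.mul u.continuous)
  let L0 : ((ℝ × ℝ) →ᵇ ℝ) →ₗ[ℝ] ℝ :=
    { toFun := fun u => ∫ p in NFZDomain, h p (r p) * u p
      map_add' := fun u v => by
        rw [← integral_add (hint u) (hint v)]
        congr 1; ext p; simp [mul_add]
      map_smul' := fun c u => by
        simp only [RingHom.id_apply, smul_eq_mul]
        rw [← MeasureTheory.integral_const_mul]
        congr 1; ext p; simp; ring }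
  have hL0 : ∀ u, L0 u = ∫ p in NFZDomain, h p (r p) * u p := fun u => rfl
  have hb : ∀ u, ‖L0 u‖ ≤ (C * V) * ‖u‖ := fun u => by
    rw [hL0]
    have := norm_setIntegral_le_of_norm_le_const (μ := volume) (s := NFZDomain)
      (f := fun p => h p (r p) * u p) (C := C * ‖u‖) hfin (fun p hp => by
        rw [norm_mul]
        exact mul_le_mul (hC p hp) (u.norm_coe_le_norm p) (norm_nonneg _)
          ((norm_nonneg _).trans (hC p hp)))
    calc _ ≤ _ := this
      _ = _ := by ring
  refine ⟨L0.mkContinuous _ hb, fun u => rfl, ?_⟩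
  rw [hasStrictFDerivAt_iff_isLittleO, Asymptotics.isLittleO_iff]
  intro c hc
  set c' := c / (V + 1) with hc'
  have hc'0 : 0 < c' := by positivity
  have hunif : ∀ᶠ s in 𝓝 (0 : ℝ), ∀ p ∈ NFZDomain, |h p (r p + s) - h p (r p)| < c' := by
    apply nfz_compact.eventually_forall_of_forall_eventually
    intro p hp
    have hcont : Continuous fun z : ℝ × (ℝ × ℝ) => |h z.2 (r z.2 + z.1) - h z.2 (r z.2)| := by
      have h1 : Continuous fun z : ℝ × (ℝ × ℝ) => h z.2 (r z.2 + z.1) :=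
        hh.comp (continuous_snd.prodMk ((hr.comp continuous_snd).add continuous_fst))
      exact (h1.sub (hhr.comp continuous_snd)).abs
    have := hcont.tendsto ((0 : ℝ), p)
    exact this.eventually (gt_mem_nhds (by simpa using hc'0))
  obtain ⟨δ, hδ, hball⟩ := Metric.eventually_nhds_iff.1 hunif
  have hev : ∀ᶠ q : ((ℝ × ℝ) →ᵇ ℝ) × ((ℝ × ℝ) →ᵇ ℝ) in 𝓝 (0, 0), ‖q.1‖ < δ ∧ ‖q.2‖ < δ := by
    rw [nhds_prod_eq]
    have : ∀ᶠ u : (ℝ × ℝ) →ᵇ ℝ in 𝓝 0, ‖u‖ < δ := by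
      filter_upwards [Metric.ball_mem_nhds (0 : (ℝ × ℝ) →ᵇ ℝ) hδ] with u hu
      simpa using hu
    exact this.prod_mk this
  filter_upwards [hev] with q hq
  obtain ⟨x, y⟩ := q
  obtain ⟨hx, hy⟩ := hq
  simp only at hx hy ⊢
  have hic : ∀ p, Continuous (h p) := fun p => hh.comp (continuous_const.prodMk continuous_id)
  have hii : ∀ p a b, IntervalIntegrable (h p) volume a b :=
    fun p a b => (hic p).intervalIntegrable a b
  have key : (∫ p in NFZDomain, ∫ ρ in (0 : ℝ)..(r p + x p), h p ρ) -
      (∫ p in NFZDomain, ∫ ρ in (0 : ℝ)..(r p + y p), h p ρ) - L0.mkContinuous _ hb (x - y)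
      = ∫ p in NFZDomain, ∫ ρ in (r p + y p)..(r p + x p), (h p ρ - h p (r p)) := by
    have hxI : Integrable (fun p => ∫ ρ in (0 : ℝ)..(r p + x p), h p ρ)
        (volume.restrict NFZDomain) := nfz_integrable (nfz_inner_cont hh (hr.add x.continuous))
    have hyI : Integrable (fun p => ∫ ρ in (0 : ℝ)..(r p + y p), h p ρ)
        (volume.restrict NFZDomain) := nfz_integrable (nfz_inner_cont hh (hr.add y.continuous))
    have hxyI : Integrable (fun p => (∫ ρ in (0 : ℝ)..(r p + x p), h p ρ) -
        ∫ ρ in (0 : ℝ)..(r p + y p), h p ρ) (volume.restrict NFZDomain) := hxI.sub hyI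
    rw [LinearMap.mkContinuous_apply, hL0,
      ← MeasureTheory.integral_sub hxI hyI, ← MeasureTheory.integral_sub hxyI (hint _)]
    congr 1
    ext p
    rw [intervalIntegral.integral_sub (hii _ _ _) (by simp),
      intervalIntegral.integral_interval_sub_left (hii _ _ _) (hii _ _ _),
      intervalIntegral.integral_const]
    simp; ring
  rw [key]
  have := norm_setIntegral_le_of_norm_le_const (μ := volume) (s := NFZDomain)
      (f := fun p => ∫ ρ in (r p + y p)..(r p + x p), (h p ρ - h p (r p)))
      (C := c' * ‖x - y‖) hfin (fun p hp => by
        have h1 := intervalIntegral.norm_integral_le_of_norm_le_const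
          (a := r p + y p) (b := r p + x p) (C := c') (f := fun ρ => h p ρ - h p (r p)) ?_
        · refine h1.trans ?_
          gcongr
          have := (x - y).norm_coe_le_norm p
          simpa using this
        · intro ρ hρ
          have hxp := (x.norm_coe_le_norm p).trans_lt hx
          have hyp := (y.norm_coe_le_norm p).trans_lt hy
          rw [Real.norm_eq_abs, abs_lt] at hxp hyp
          have h2 := Set.uIoc_subset_uIcc hρ
          rw [Set.mem_uIcc] at h2
          have h3 : |ρ - r p| < δ := by
            rw [abs_lt]
            rcases h2 with h2 | h2 <;> constructor <;> linarith [h2.1, h2.2]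
          have h4 := hball (y := ρ - r p) (by simpa [Real.dist_eq] using h3) p hp
          rw [Real.norm_eq_abs]
          simpa using h4.le)
  refine this.trans ?_
  have h5 : c' * V ≤ c := by
    rw [hc', div_mul_eq_mul_div, div_le_iff₀ (by positivity)]
    nlinarith
  calc c' * ‖x - y‖ * V = (c' * V) * ‖x - y‖ := by ring
    _ ≤ c * ‖x - y‖ := by gcongr

/-- Euler–Lagrange condition for the minimum-volume no-fly zone:
if `r*` is a continuous positive local minimizer (w.r.t. the sup norm) of the volume `J`
subject to the interference-reduction constraint `K(r) = a`, and the first variation of `K`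
at `r*` is nondegenerate (witnessed by a smooth test function `η₀` compactly supported in
the open rectangle), then there is a Lagrange multiplier `μ ∈ ℝ` such that
`P·λ(φ,θ,r*(φ,θ))·l(r*(φ,θ))·g(φ,θ) = μ` on the open rectangle `(0,2π) × (0,π/2)`. -/
theorem minimum_volume_no_fly_zone_euler_lagrange
    (lam : ℝ × ℝ → ℝ → ℝ)
    (hlam_cont : ContinuousOn (fun q : (ℝ × ℝ) × ℝ => lam q.1 q.2)
      (NFZDomain ×ˢ Set.Ici (0 : ℝ)))
    (hlam_nonneg : ∀ p ∈ NFZDomain, ∀ ρ ≥ (0 : ℝ), 0 ≤ lam p ρ)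
    (l : ℝ → ℝ) (hl_cont : ContinuousOn l (Set.Ici (0 : ℝ)))
    (hl_nonneg : ∀ ρ ≥ (0 : ℝ), 0 ≤ l ρ)
    (g : ℝ × ℝ → ℝ) (hg_cont : ContinuousOn g NFZDomain)
    (hg_nonneg : ∀ p ∈ NFZDomain, 0 ≤ g p)
    (P : ℝ) (hP : 0 < P) (a : ℝ)
    (rstar : ℝ × ℝ → ℝ) (hrstar_cont : ContinuousOn rstar NFZDomain)
    (hrstar_pos : ∀ p ∈ NFZDomain, 0 < rstar p)
    (hKa : interfK P lam l g rstar = a)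
    -- `r*` is a local minimizer of `J` (w.r.t. the sup norm) among continuous positive
    -- functions satisfying the constraint `K(r) = a`:
    (hmin : ∃ ε > (0 : ℝ), ∀ r : ℝ × ℝ → ℝ, ContinuousOn r NFZDomain →
      (∀ p ∈ NFZDomain, 0 < r p) → (∀ p ∈ NFZDomain, |r p - rstar p| ≤ ε) →
      interfK P lam l g r = a → volJ rstar ≤ volJ r)
    -- nondegeneracy: the first variation of `K` at `r*` is not identically zero:
    (η₀ : ℝ × ℝ → ℝ) (hη₀_smooth : ContDiff ℝ (⊤ : ℕ∞) η₀)
    (hη₀_supp : HasCompactSupport η₀)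
    (hη₀_supp' : tsupport η₀ ⊆ Set.Ioo (0 : ℝ) (2 * Real.pi) ×ˢ Set.Ioo (0 : ℝ) (Real.pi / 2))
    (hη₀_ne : (∫ φ in (0 : ℝ)..(2 * Real.pi), ∫ θ in (0 : ℝ)..(Real.pi / 2),
      P * lam (φ, θ) (rstar (φ, θ)) * l (rstar (φ, θ)) * g (φ, θ) * rstar (φ, θ) ^ 2 *
        Real.sin θ * η₀ (φ, θ)) ≠ 0) :
    ∃ μ : ℝ, ∀ p ∈ Set.Ioo (0 : ℝ) (2 * Real.pi) ×ˢ Set.Ioo (0 : ℝ) (Real.pi / 2),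
      P * lam p (rstar p) * l (rstar p) * g p = μ := by
  obtain ⟨ε, hε, hmin⟩ := hmin
  -- global continuous extensions
  set hK : ℝ × ℝ → ℝ → ℝ := fun p ρ =>
    P * lam (nfzClamp p) (max ρ 0) * l (max ρ 0) * g (nfzClamp p) * ρ ^ 2 * Real.sin p.2 with hK_def
  set hJ : ℝ × ℝ → ℝ → ℝ := fun p ρ => ρ ^ 2 * Real.sin p.2 with hJ_def
  set R : ℝ × ℝ → ℝ := fun p => rstar (nfzClamp p) with hR_def
  have hRc : Continuous R :=
    hrstar_cont.comp_continuous nfzClamp_cont nfzClamp_mem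
  have hReq : ∀ p ∈ NFZDomain, R p = rstar p := fun p hp => by simp only [hR_def, nfzClamp_eq hp]
  have hRpos : ∀ p, 0 < R p := fun p => hrstar_pos _ (nfzClamp_mem p)
  have hfac : Continuous fun q : (ℝ × ℝ) × ℝ =>
      P * lam (nfzClamp q.1) (max q.2 0) * l (max q.2 0) * g (nfzClamp q.1) := by
    have h1 : Continuous fun q : (ℝ × ℝ) × ℝ => lam (nfzClamp q.1) (max q.2 0) :=
      hlam_cont.comp_continuous (f := fun q : (ℝ × ℝ) × ℝ => (nfzClamp q.1, max q.2 0))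
        ((nfzClamp_cont.comp continuous_fst).prodMk (continuous_snd.max continuous_const))
        (fun q => ⟨nfzClamp_mem _, Set.mem_Ici.2 (le_max_right _ _)⟩)
    have h2 : Continuous fun q : (ℝ × ℝ) × ℝ => l (max q.2 0) :=
      hl_cont.comp_continuous (continuous_snd.max continuous_const) (fun q => Set.mem_Ici.2 (le_max_right _ _))
    have h3 : Continuous fun q : (ℝ × ℝ) × ℝ => g (nfzClamp q.1) :=
      hg_cont.comp_continuous (nfzClamp_cont.comp continuous_fst) (fun q => nfzClamp_mem _)
    exact ((continuous_const.mul h1).mul h2).mul h3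
  have hKc : Continuous (Function.uncurry hK) := by
    have : Continuous fun q : (ℝ × ℝ) × ℝ => q.2 ^ 2 := by fun_prop
    have h2 : Continuous fun q : (ℝ × ℝ) × ℝ => Real.sin q.1.2 := by fun_prop
    exact (hfac.mul this).mul h2
  have hJc : Continuous (Function.uncurry hJ) := by
    have : Continuous fun q : (ℝ × ℝ) × ℝ => q.2 ^ 2 * Real.sin q.1.2 := by fun_prop
    exact this
  have hKeq : ∀ p ∈ NFZDomain, ∀ ρ, 0 ≤ ρ →
      P * lam p ρ * l ρ * g p * ρ ^ 2 * Real.sin p.2 = hK p ρ := fun p hp ρ hρ => by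
    simp only [hK_def, nfzClamp_eq hp, max_eq_left hρ]
  obtain ⟨LK, hLK, hdK⟩ := nfz_deriv hKc hRc
  obtain ⟨LJ, hLJ, hdJ⟩ := nfz_deriv hJc hRc
  -- the functionals in terms of the extensions
  have hKval : ∀ (r : ℝ × ℝ → ℝ) (u : (ℝ × ℝ) →ᵇ ℝ), (∀ p ∈ NFZDomain, r p = R p + u p) →
      (∀ p ∈ NFZDomain, 0 < r p) → interfK P lam l g r =
        ∫ p in NFZDomain, ∫ ρ in (0 : ℝ)..(R p + u p), hK p ρ := by
    intro r u hru hpos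
    refine nfz_iter (F := fun p => ∫ ρ in (0 : ℝ)..(r p),
      P * lam p ρ * l ρ * g p * ρ ^ 2 * Real.sin p.2)
      (nfz_inner_cont hKc (hRc.add u.continuous)) (fun p hp => ?_)
    rw [hru p hp]
    refine intervalIntegral.integral_congr fun ρ hρ => ?_
    have h0 := hpos p hp
    rw [hru p hp] at h0
    rw [Set.uIcc_of_le h0.le] at hρ
    exact hKeq p hp ρ hρ.1
  have hJval : ∀ (r : ℝ × ℝ → ℝ) (u : (ℝ × ℝ) →ᵇ ℝ), (∀ p ∈ NFZDomain, r p = R p + u p) →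
      volJ r = ∫ p in NFZDomain, ∫ ρ in (0 : ℝ)..(R p + u p), hJ p ρ := by
    intro r u hru
    refine nfz_iter (F := fun p => ∫ ρ in (0 : ℝ)..(r p), ρ ^ 2 * Real.sin p.2)
      (nfz_inner_cont hJc (hRc.add u.continuous)) (fun p hp => ?_)
    simp only [hJ_def]
    rw [hru p hp]
  obtain ⟨m, hm, hmR⟩ : ∃ m > 0, ∀ p ∈ NFZDomain, m ≤ R p := by
    obtain ⟨p0, -, hp0⟩ := nfz_compact.exists_isMinOn ⟨_, nfzClamp_mem 0⟩ hRc.continuousOn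
    exact ⟨R p0, hRpos p0, fun p hp => hp0 hp⟩
  have hloc : IsLocalExtrOn
      (fun u : (ℝ × ℝ) →ᵇ ℝ => ∫ p in NFZDomain, ∫ ρ in (0 : ℝ)..(R p + u p), hJ p ρ)
      {u | (∫ p in NFZDomain, ∫ ρ in (0 : ℝ)..(R p + u p), hK p ρ) =
        (fun u : (ℝ × ℝ) →ᵇ ℝ => ∫ p in NFZDomain, ∫ ρ in (0 : ℝ)..(R p + u p), hK p ρ) 0} 0 := by
    left
    have hbl : ∀ᶠ u : (ℝ × ℝ) →ᵇ ℝ in 𝓝 0, ‖u‖ < min m ε := by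
      filter_upwards [Metric.ball_mem_nhds (0 : (ℝ × ℝ) →ᵇ ℝ) (lt_min hm hε)] with u hu
      simpa using hu
    filter_upwards [mem_nhdsWithin_of_mem_nhds hbl, self_mem_nhdsWithin] with u hu hu2
    have hz : ∀ p ∈ NFZDomain, rstar p = R p + (0 : (ℝ × ℝ) →ᵇ ℝ) p := fun p hp => by
      simp [hReq p hp]
    have hup : ∀ p, |u p| < min m ε := fun p => (u.norm_coe_le_norm p).trans_lt hu
    have hpos : ∀ p ∈ NFZDomain, 0 < R p + u p := fun p hp => by
      have h1 := (abs_lt.1 ((hup p).trans_le (min_le_left _ _))).1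
      linarith [hmR p hp]
    have := hmin (fun p => R p + u p) (hRc.add u.continuous).continuousOn hpos
      (fun p hp => by
        rw [hReq p hp, add_sub_cancel_left]
        exact ((hup p).trans_le (min_le_right _ _)).le)
      (by
        rw [hKval _ u (fun p _ => rfl) hpos, ← hKa, hKval rstar 0 hz hrstar_pos]
        exact hu2)
    rwa [hJval _ u (fun p _ => rfl), hJval rstar 0 hz] at this
  obtain ⟨b, c, hbc, hmul⟩ := hloc.exists_multipliers_of_hasStrictFDerivAt_1d hdK hdJ
  have hmulu : ∀ u, b * LK u + c * LJ u = 0 := fun u => by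
    have := DFunLike.congr_fun hmul u
    simpa using this
  have hKRc : Continuous fun p => hK p (R p) := hKc.comp (continuous_id.prodMk hRc)
  have hJRc : Continuous fun p => hJ p (R p) := hJc.comp (continuous_id.prodMk hRc)
  have hKR : ∀ p ∈ NFZDomain, hK p (R p) =
      P * lam p (rstar p) * l (rstar p) * g p * rstar p ^ 2 * Real.sin p.2 := fun p hp => by
    rw [← hKeq p hp _ (hRpos p).le, hReq p hp]
  have hc0 : c ≠ 0 := by
    rintro rfl
    have hb0 : b ≠ 0 := by
      rintro rfl; exact hbc rfl
    obtain ⟨u, hu⟩ := nfz_ext hη₀_smooth.continuous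
    apply hη₀_ne
    rw [nfz_iter (F := fun p => P * lam p (rstar p) * l (rstar p) * g p * rstar p ^ 2 *
        Real.sin p.2 * η₀ p) (H := fun p => hK p (R p) * u p) (hKRc.mul u.continuous)
        (fun p hp => by simp only [hKR p hp, hu p hp]), ← hLK]
    simpa [hb0] using hmulu u
  set w : ℝ × ℝ → ℝ := fun p => b * hK p (R p) + c * hJ p (R p) with hw_def
  have hwc : Continuous w := (continuous_const.mul hKRc).add (continuous_const.mul hJRc)
  obtain ⟨u, hu⟩ := nfz_ext hwc
  have hint0 : ∫ p in NFZDomain, w p * w p = 0 := by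
    have hI1 : Integrable (fun p => b * (hK p (R p) * u p)) (volume.restrict NFZDomain) :=
      nfz_integrable (continuous_const.mul (hKRc.mul u.continuous))
    have hI2 : Integrable (fun p => c * (hJ p (R p) * u p)) (volume.restrict NFZDomain) :=
      nfz_integrable (continuous_const.mul (hJRc.mul u.continuous))
    rw [← hmulu u, hLK, hLJ, ← MeasureTheory.integral_const_mul, ← MeasureTheory.integral_const_mul,
      ← MeasureTheory.integral_add hI1 hI2]
    refine setIntegral_congr_fun nfz_meas fun p hp => ?_
    simp only [hu p hp]
    simp only [hw_def]; ring
  have hae : (fun p => w p * w p) =ᵐ[volume.restrict NFZDomain] 0 :=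
    (integral_eq_zero_iff_of_nonneg (fun p => mul_self_nonneg _)
      (nfz_integrable (hwc.mul hwc))).1 hint0
  set U : Set (ℝ × ℝ) := Set.Ioo (0 : ℝ) (2 * Real.pi) ×ˢ Set.Ioo (0 : ℝ) (Real.pi / 2) with hU
  have hUD : U ⊆ NFZDomain := Set.prod_mono Set.Ioo_subset_Icc_self Set.Ioo_subset_Icc_self
  have hUo : IsOpen U := isOpen_Ioo.prod isOpen_Ioo
  have hw0 : Set.EqOn (fun p => w p * w p) 0 U :=
    Measure.eqOn_open_of_ae_eq (ae_restrict_of_ae_restrict_of_subset hUD hae) hUo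
      (hwc.mul hwc).continuousOn continuousOn_const
  have hfin : ∀ p ∈ U, b * (P * lam p (rstar p) * l (rstar p) * g p) + c = 0 := fun p hp => by
    have h1 : w p = 0 := by simpa using hw0 hp
    have hpD := hUD hp
    rw [hw_def] at h1
    simp only at h1
    rw [hKR p hpD] at h1
    simp only [hJ_def, hReq p hpD] at h1
    have hs : 0 < Real.sin p.2 :=
      Real.sin_pos_of_pos_of_lt_pi hp.2.1 (by linarith [hp.2.2, Real.pi_pos])
    have hr := hrstar_pos p hpD
    have h2 : rstar p ^ 2 * Real.sin p.2 ≠ 0 := by positivity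
    apply mul_right_cancel₀ h2
    linear_combination h1
  refine ⟨-c / b, fun p hp => ?_⟩
  have h1 := hfin p hp
  have hb0 : b ≠ 0 := by
    rintro rfl
    apply hc0; simpa using h1
  field_simp
  linear_combination h1
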